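/- arXiv:2304.08507 — 6 statements merged into one kernel-verified Lean document; each statement's English description precedes it below -/
import Mathlib

section
/- Let X be a nonempty set, b ≥ 1, ρ ≥ 0, and let d be a b-suprametric on X such that (X,d) is complete. Let f : X → X and suppose there exists a Matkowski function ψ such that d(f x, f y) ≤ ψ(d(x,y)) for all x, y ∈ X. Then f has a unique fixed point x⋆ in X, and for every x₀ ∈ X the Picard iterates satisfy d(fⁿ x₀, x⋆) → 0 as n → ∞. -/
/-- **Theorem (main result).** Let `X` be a nonempty set, `b ≥ 1`, `ρ ≥ 0`, and `d` a
complete `b`-suprametric on `X`. If `f : X → X` satisfies `d (f x) (f y) ≤ ψ (d x y)`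
for a Matkowski function `ψ`, then `f` has a unique fixed point and every Picard
iteration converges to it. -/
theorem b_suprametric_matkowski_fixed_point
    {X : Type*} [Nonempty X] (b ρ : ℝ) (hb : 1 ≤ b) (hρ : 0 ≤ ρ)
    (d : X → X → ℝ)
    (hd_nonneg : ∀ x y, 0 ≤ d x y)
    (hd_eq : ∀ x y, d x y = 0 ↔ x = y)
    (hd_symm : ∀ x y, d x y = d y x)
    (hd_tri : ∀ x y z, d x y ≤ b * (d x z + d z y) + ρ * d x z * d z y)
    (hd_complete : ∀ u : ℕ → X,
      Filter.Tendsto (fun pq : ℕ × ℕ => d (u pq.1) (u pq.2)) Filter.atTop (nhds 0) →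
      ∃ x : X, Filter.Tendsto (fun n => d (u n) x) Filter.atTop (nhds 0))
    (f : X → X) (ψ : ℝ → ℝ)
    (hψ_nonneg : ∀ t, 0 ≤ t → 0 ≤ ψ t)
    (hψ_mono : MonotoneOn ψ (Set.Ici 0))
    (hψ_iter : ∀ t, 0 < t →
      Filter.Tendsto (fun n => ψ^[n] t) Filter.atTop (nhds 0))
    (h_contr : ∀ x y, d (f x) (f y) ≤ ψ (d x y)) :
    ∃ xs : X, f xs = xs ∧ (∀ y, f y = y → y = xs) ∧
      ∀ x₀ : X, Filter.Tendsto (fun n => d (f^[n] x₀) xs) Filter.atTop (nhds 0) := by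
  have hlt : ∀ t, 0 < t → ψ t < t := by
    intro t ht
    by_contra hcon
    push Not at hcon
    have hge : ∀ n, t ≤ ψ^[n] t := by
      intro n
      induction n with
      | zero => simp
      | succ n ih =>
        rw [Function.iterate_succ_apply']
        exact hcon.trans (hψ_mono (Set.mem_Ici.2 ht.le) (Set.mem_Ici.2 (ht.le.trans ih)) ih)
    have := ge_of_tendsto' (hψ_iter t ht) hge
    linarith
  have h0 : ψ 0 = 0 := by
    apply le_antisymm _ (hψ_nonneg 0 le_rfl)
    apply le_of_forall_pos_le_add
    intro t ht
    have h1 := hψ_mono (Set.mem_Ici.2 le_rfl) (Set.mem_Ici.2 ht.le) ht.le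
    have h2 := hlt t ht
    linarith
  have hle : ∀ t, 0 ≤ t → ψ t ≤ t := by
    intro t ht
    rcases ht.eq_or_lt with h | h
    · rw [← h, h0]
    · exact (hlt t h).le
  have hiter : ∀ t, 0 ≤ t → Filter.Tendsto (fun n => ψ^[n] t) Filter.atTop (nhds 0) := by
    intro t ht
    rcases ht.eq_or_lt with h | h
    · rw [← h]
      have : ∀ n, ψ^[n] 0 = 0 := fun n => Function.iterate_fixed h0 n
      simp [this]
    · exact hψ_iter t h
  have hcn : ∀ n x y t, d x y ≤ t → d (f^[n] x) (f^[n] y) ≤ ψ^[n] t := by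
    intro n
    induction n with
    | zero => intro x y t h; simpa using h
    | succ n ih =>
      intro x y t h
      rw [Function.iterate_succ_apply, Function.iterate_succ_apply, Function.iterate_succ_apply]
      apply ih
      exact (h_contr x y).trans (hψ_mono (Set.mem_Ici.2 (hd_nonneg _ _))
        (Set.mem_Ici.2 ((hd_nonneg _ _).trans h)) h)
  have htend : ∀ x y, Filter.Tendsto (fun n => d (f^[n] x) (f^[n] y)) Filter.atTop (nhds 0) :=
    fun x y => squeeze_zero (fun n => hd_nonneg _ _) (fun n => hcn n x y _ le_rfl)
      (hiter _ (hd_nonneg x y))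
  have hcauchy : ∀ x₀ : X, ∀ ε, 0 < ε → ∃ N, ∀ n, N ≤ n → ∀ m,
      d (f^[n] x₀) (f^[m] (f^[n] x₀)) ≤ ε := by
    intro x₀ ε hε
    have hB : 0 < 2 * b + ρ := by linarith
    obtain ⟨δ, hδ, hδ1, hδε⟩ : ∃ δ : ℝ, 0 < δ ∧ δ ≤ 1 ∧ (2 * b + ρ) * δ ≤ ε := by
      refine ⟨min 1 (ε / (2 * b + ρ)), by positivity, min_le_left _ _, ?_⟩
      calc (2 * b + ρ) * min 1 (ε / (2 * b + ρ)) ≤ (2 * b + ρ) * (ε / (2 * b + ρ)) := by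
            gcongr; exact min_le_right _ _
        _ = ε := by field_simp
    have hδle : δ ≤ ε := by nlinarith
    obtain ⟨k, hk, hk1⟩ := (((hψ_iter ε hε).eventually_lt_const hδ).and
      (Filter.eventually_ge_atTop 1)).exists
    have hev : ∀ᶠ n in Filter.atTop, ∀ i ∈ Finset.range (k + 1),
        d (f^[n] x₀) (f^[n] (f^[i] x₀)) < δ := by
      rw [Filter.eventually_all_finset]
      intro i _
      exact (htend x₀ (f^[i] x₀)).eventually_lt_const hδ
    obtain ⟨N, hN⟩ := Filter.eventually_atTop.1 hev
    refine ⟨N, fun n hn => ?_⟩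
    have hsm : ∀ i, i ≤ k → d (f^[n] x₀) (f^[i] (f^[n] x₀)) < δ := by
      intro i hi
      have := hN n hn i (Finset.mem_range.2 (by omega))
      rwa [← Function.iterate_add_apply, add_comm, Function.iterate_add_apply] at this
    intro m
    induction m using Nat.strong_induction_on with
    | _ m ih =>
      by_cases hm : m ≤ k
      · exact (hsm m hm).le.trans hδle
      · obtain ⟨j, rfl⟩ : ∃ j, m = k + j := ⟨m - k, by omega⟩
        have h1 := hcn k _ _ _ (ih j (by omega))
        rw [← Function.iterate_add_apply f k j] at h1
        have h2 := hsm k le_rfl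
        have h3 := hd_tri (f^[n] x₀) (f^[k + j] (f^[n] x₀)) (f^[k] (f^[n] x₀))
        have p1 := hd_nonneg (f^[n] x₀) (f^[k] (f^[n] x₀))
        have p2 := hd_nonneg (f^[k] (f^[n] x₀)) (f^[k + j] (f^[n] x₀))
        generalize d (f^[n] x₀) (f^[k] (f^[n] x₀)) = A at *
        generalize d (f^[k] (f^[n] x₀)) (f^[k + j] (f^[n] x₀)) = B at *
        have h4 : A * B ≤ δ := by nlinarith
        have h5 : ρ * (A * B) ≤ ρ * δ := by gcongr
        have h6 : b * (A + B) ≤ b * (δ + δ) := by gcongr; linarith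
        linarith
  obtain ⟨x₁⟩ := ‹Nonempty X›
  obtain ⟨x, hx⟩ := hd_complete (fun n => f^[n] x₁) (by
    rw [Metric.tendsto_atTop]
    intro ε hε
    obtain ⟨N, hN⟩ := hcauchy x₁ (ε / 2) (by linarith)
    have key : ∀ p q, N ≤ p → p ≤ q → d (f^[p] x₁) (f^[q] x₁) ≤ ε / 2 := by
      intro p q hp hpq
      have := hN p hp (q - p)
      rwa [← Function.iterate_add_apply, Nat.sub_add_cancel hpq] at this
    refine ⟨(N, N), fun pq hpq => ?_⟩
    rw [Real.dist_eq, sub_zero, abs_of_nonneg (hd_nonneg _ _)]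
    rcases le_total pq.1 pq.2 with h | h
    · have := key _ _ hpq.1 h
      linarith
    · have := key _ _ hpq.2 h
      rw [hd_symm]
      linarith)
  have hfix : f x = x := by
    have hs := hx.comp (Filter.tendsto_add_atTop_nat 1)
    have hle0 : d x (f x) ≤ 0 := by
      have hlim : Filter.Tendsto (fun n => b * (d (f^[n + 1] x₁) x + d (f^[n] x₁) x)
          + ρ * d (f^[n + 1] x₁) x * d (f^[n] x₁) x) Filter.atTop
          (nhds (b * (0 + 0) + ρ * 0 * 0)) :=
        ((hs.add hx).const_mul b).add ((hs.const_mul ρ).mul hx)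
      have := ge_of_tendsto' hlim (b := d x (f x)) (fun n => by
        have h1 := hd_tri x (f x) (f^[n + 1] x₁)
        have h2 : d (f^[n + 1] x₁) (f x) ≤ d (f^[n] x₁) x := by
          rw [Function.iterate_succ_apply']
          exact (h_contr _ _).trans (hle _ (hd_nonneg _ _))
        rw [hd_symm x (f^[n + 1] x₁)] at h1
        have p := hd_nonneg (f^[n + 1] x₁) x
        refine h1.trans ?_
        gcongr)
      simpa using this
    exact ((hd_eq _ _).1 (le_antisymm hle0 (hd_nonneg _ _))).symm
  refine ⟨x, hfix, fun y hy => ?_, fun x₀ => ?_⟩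
  · by_contra hne
    have hpos : 0 < d y x := lt_of_le_of_ne (hd_nonneg _ _)
      (fun h => hne ((hd_eq _ _).1 h.symm))
    have h1 := h_contr y x
    rw [hy, hfix] at h1
    linarith [hlt _ hpos]
  · have := htend x₀ x
    simpa only [Function.iterate_fixed hfix] using this
end

section
/- Let X be a nonempty set, b ≥ 1, ρ ≥ 0, and let d be a b-suprametric on X such that (X,d) is complete. Let f : X → X and suppose there exists a Matkowski function ψ satisfying additionally limsup_{n→∞} ψ^{n+1}(t)/ψⁿ(t) < 1/b for every t > 0, and such that d(f x, f y) ≤ ψ(d(x,y)) for all x, y ∈ X. Then f has a unique fixed point x⋆ in X, and for every x₀ ∈ X the Picard iterates satisfy d(fⁿ x₀, x⋆) → 0 as n → ∞. -/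
/-- **Theorem.** Let `X` be a nonempty set, `b ≥ 1`, `ρ ≥ 0`, and `d` a complete
`b`-suprametric on `X`. If `f : X → X` satisfies `d (f x) (f y) ≤ ψ (d x y)` for a
Matkowski function `ψ` that additionally satisfies
`limsup_n ψ^[n+1] t / ψ^[n] t < 1/b` for all `t > 0`, then `f` has a unique fixed
point and every Picard iteration converges to it. -/
theorem b_suprametric_matkowski_b_fixed_point
    {X : Type*} [Nonempty X] (b ρ : ℝ) (hb : 1 ≤ b) (hρ : 0 ≤ ρ)
    (d : X → X → ℝ)
    (hd_nonneg : ∀ x y, 0 ≤ d x y)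
    (hd_eq : ∀ x y, d x y = 0 ↔ x = y)
    (hd_symm : ∀ x y, d x y = d y x)
    (hd_tri : ∀ x y z, d x y ≤ b * (d x z + d z y) + ρ * d x z * d z y)
    (hd_complete : ∀ u : ℕ → X,
      Filter.Tendsto (fun pq : ℕ × ℕ => d (u pq.1) (u pq.2)) Filter.atTop (nhds 0) →
      ∃ x : X, Filter.Tendsto (fun n => d (u n) x) Filter.atTop (nhds 0))
    (f : X → X) (ψ : ℝ → ℝ)
    (hψ_nonneg : ∀ t, 0 ≤ t → 0 ≤ ψ t)
    (hψ_mono : MonotoneOn ψ (Set.Ici 0))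
    (hψ_iter : ∀ t, 0 < t →
      Filter.Tendsto (fun n => ψ^[n] t) Filter.atTop (nhds 0))
    (hψ_ratio : ∀ t, 0 < t →
      Filter.limsup (fun n => ψ^[n + 1] t / ψ^[n] t) Filter.atTop < 1 / b)
    (h_contr : ∀ x y, d (f x) (f y) ≤ ψ (d x y)) :
    ∃ xs : X, f xs = xs ∧ (∀ y, f y = y → y = xs) ∧
      ∀ x₀ : X, Filter.Tendsto (fun n => d (f^[n] x₀) xs) Filter.atTop (nhds 0) := by
  have hlt : ∀ t, 0 < t → ψ t < t := by
    intro t ht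
    by_contra! hcon
    have key : ∀ n, t ≤ ψ^[n] t := by
      intro n
      induction n with
      | zero => simp
      | succ k ih =>
        rw [Function.iterate_succ_apply']
        exact hcon.trans (hψ_mono ht.le (ht.le.trans ih) ih)
    have := ge_of_tendsto' (hψ_iter t ht) key
    linarith
  have h0 : ψ 0 = 0 := by
    by_contra hne
    have hpos : 0 < ψ 0 := lt_of_le_of_ne (hψ_nonneg 0 le_rfl) (Ne.symm hne)
    have h1 := hlt _ hpos
    have h2 := hψ_mono (Set.mem_Ici.2 le_rfl) (Set.mem_Ici.2 hpos.le) hpos.le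
    linarith
  have hle : ∀ t, 0 ≤ t → ψ t ≤ t := by
    intro t ht
    rcases ht.eq_or_lt with h | h
    · rw [← h, h0]
    · exact (hlt t h).le
  have hit0 : ∀ t, 0 ≤ t → Filter.Tendsto (fun n => ψ^[n] t) Filter.atTop (nhds 0) := by
    intro t ht
    rcases ht.eq_or_lt with h | h
    · have : ∀ n, ψ^[n] t = 0 := by
        intro n
        rw [← h]
        exact Function.iterate_fixed h0 n
      simp [this]
    · exact hψ_iter t h
  have hnn : ∀ n t, 0 ≤ t → 0 ≤ ψ^[n] t := by
    intro n t ht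
    induction n with
    | zero => simpa
    | succ k ih =>
      rw [Function.iterate_succ_apply']
      exact hψ_nonneg _ ih
  have hmono : ∀ n s t, 0 ≤ s → s ≤ t → ψ^[n] s ≤ ψ^[n] t := by
    intro n s t hs hst
    induction n with
    | zero => simpa
    | succ k ih =>
      rw [Function.iterate_succ_apply', Function.iterate_succ_apply']
      exact hψ_mono (hnn k s hs) (hnn k t (hs.trans hst)) ih
  have hcn : ∀ n x y, d (f^[n] x) (f^[n] y) ≤ ψ^[n] (d x y) := by
    intro n x y
    induction n with
    | zero => simp
    | succ k ih =>
      rw [Function.iterate_succ_apply', Function.iterate_succ_apply',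
        Function.iterate_succ_apply']
      exact (h_contr _ _).trans (hψ_mono (hd_nonneg _ _) (hnn k _ (hd_nonneg _ _)) ih)
  have hconv : ∀ x y, Filter.Tendsto (fun n => d (f^[n] x) (f^[n] y)) Filter.atTop (nhds 0) :=
    fun x y => squeeze_zero (fun n => hd_nonneg _ _) (fun n => hcn n x y)
      (hit0 _ (hd_nonneg x y))
  obtain ⟨x₀⟩ := ‹Nonempty X›
  -- the Picard sequence is Cauchy
  have hmain : ∀ ε : ℝ, 0 < ε → ∃ N, ∀ n, N ≤ n → ∀ m, d (f^[n] x₀) (f^[n + m] x₀) ≤ ε := by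
    intro ε hε
    have hc : 0 < 2 * b + ρ := by linarith
    obtain ⟨δ, hδ, hδ1, hδc⟩ : ∃ δ : ℝ, 0 < δ ∧ δ ≤ 1 ∧ δ * (2 * b + ρ) ≤ ε := by
      refine ⟨min 1 (ε / (2 * b + ρ)), lt_min one_pos (div_pos hε hc), min_le_left _ _, ?_⟩
      exact (le_div_iff₀ hc).1 (min_le_right _ _)
    have hδε : δ ≤ ε := by nlinarith
    obtain ⟨k, hk, hk1⟩ :=
      (((hψ_iter ε hε).eventually (gt_mem_nhds hδ)).and (Filter.eventually_ge_atTop 1)).exists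
    have hev : ∀ᶠ n in Filter.atTop, ∀ r ∈ Finset.range (k + 1),
        d (f^[n] x₀) (f^[n] (f^[r] x₀)) < δ :=
      (Filter.eventually_all_finset _).2
        (fun r _ => (hconv x₀ (f^[r] x₀)).eventually (gt_mem_nhds hδ))
    obtain ⟨N, hN⟩ := Filter.eventually_atTop.1 hev
    refine ⟨N, fun n hn m => ?_⟩
    have hball : ∀ y, d (f^[n] x₀) y ≤ ε → d (f^[n] x₀) (f^[k] y) ≤ ε := by
      intro y hy
      have h1 : d (f^[n] x₀) (f^[k] (f^[n] x₀)) ≤ δ := by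
        have := hN n hn k (by simp)
        rw [← Function.iterate_add_apply, Nat.add_comm, Function.iterate_add_apply] at this
        exact this.le
      have h2 : d (f^[k] (f^[n] x₀)) (f^[k] y) ≤ δ :=
        (hcn k _ _).trans ((hmono k _ _ (hd_nonneg _ _) hy).trans hk.le)
      have h3 := hd_tri (f^[n] x₀) (f^[k] y) (f^[k] (f^[n] x₀))
      have h4 := hd_nonneg (f^[n] x₀) (f^[k] (f^[n] x₀))
      have h5 := hd_nonneg (f^[k] (f^[n] x₀)) (f^[k] y)
      generalize d (f^[n] x₀) (f^[k] (f^[n] x₀)) = p at *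
      generalize d (f^[k] (f^[n] x₀)) (f^[k] y) = q at *
      have h6 : p * q ≤ δ * 1 := mul_le_mul h1 (h2.trans hδ1) h5 hδ.le
      have h7 : ρ * (p * q) ≤ ρ * (δ * 1) := mul_le_mul_of_nonneg_left h6 hρ
      have h8 : b * (p + q) ≤ b * (δ + δ) :=
        mul_le_mul_of_nonneg_left (add_le_add h1 h2) (by linarith)
      nlinarith
    have hstep : ∀ j r, r < k → d (f^[n] x₀) (f^[n + (r + k * j)] x₀) ≤ ε := by
      intro j r hr
      induction j with
      | zero =>
        have := hN n hn r (by simp; omega)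
        rw [← Function.iterate_add_apply] at this
        simpa using this.le.trans hδε
      | succ j ih =>
        have := hball _ ih
        rw [← Function.iterate_add_apply] at this
        have e : n + (r + k * (j + 1)) = k + (n + (r + k * j)) := by ring
        rw [e]
        exact this
    have := hstep (m / k) (m % k) (Nat.mod_lt _ hk1)
    rwa [Nat.mod_add_div] at this
  have hcauchy : Filter.Tendsto (fun pq : ℕ × ℕ => d (f^[pq.1] x₀) (f^[pq.2] x₀))
      Filter.atTop (nhds 0) := by
    rw [Metric.tendsto_atTop]
    intro ε hε
    obtain ⟨N, hN⟩ := hmain (ε / 2) (half_pos hε)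
    refine ⟨(N, N), ?_⟩
    rintro ⟨p, q⟩ ⟨hp, hq⟩
    simp only at hp hq
    rw [Real.dist_eq, sub_zero, abs_of_nonneg (hd_nonneg _ _)]
    refine lt_of_le_of_lt ?_ (half_lt_self hε)
    rcases le_total p q with h | h
    · obtain ⟨m, rfl⟩ := Nat.exists_eq_add_of_le h
      exact hN p hp m
    · obtain ⟨m, rfl⟩ := Nat.exists_eq_add_of_le h
      rw [hd_symm]
      exact hN q hq m
  obtain ⟨xs, hxs⟩ := hd_complete (fun n => f^[n] x₀) hcauchy
  have hfix : f xs = xs := by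
    have hA : Filter.Tendsto (fun n => d (f xs) (f^[n + 1] x₀)) Filter.atTop (nhds 0) := by
      refine squeeze_zero (fun n => hd_nonneg _ _) (fun n => ?_) hxs
      rw [hd_symm, Function.iterate_succ_apply']
      exact (h_contr _ _).trans (hle _ (hd_nonneg _ _))
    have hB : Filter.Tendsto (fun n => d (f^[n + 1] x₀) xs) Filter.atTop (nhds 0) :=
      hxs.comp (Filter.tendsto_add_atTop_nat 1)
    have hC := ((hA.add hB).const_mul b).add ((hA.const_mul ρ).mul hB)
    have hD := ge_of_tendsto' hC (fun n => hd_tri (f xs) xs (f^[n + 1] x₀))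
    apply (hd_eq _ _).1
    apply le_antisymm _ (hd_nonneg _ _)
    simpa using hD
  refine ⟨xs, hfix, ?_, ?_⟩
  · intro y hy
    by_contra hne
    have hpos : 0 < d y xs :=
      lt_of_le_of_ne (hd_nonneg _ _) (fun h => hne ((hd_eq _ _).1 h.symm))
    have h1 := h_contr y xs
    rw [hy, hfix] at h1
    have h2 := hlt _ hpos
    linarith
  · intro x
    have h := hconv x xs
    have e : ∀ n, f^[n] xs = xs := fun n => Function.iterate_fixed hfix n
    simpa only [e] using h
end

section
/- Let X be a nonempty set, b ≥ 1, ρ ≥ 0, and let d be a b-suprametric on X such that (X,d) is complete.fLet f : X → X and suppose there exists c ∈ [0,1) such that d(f x, f y) ≤ c·d(x,y) for all x, y ∈ X. Then f has a unique fixed point x⋆ in X, and for every x₀ ∈ X the Picard iterates satisfy d(fⁿ x₀, x⋆) → 0 as n → ∞. -/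
/-- **Corollary.** Let `X` be a nonempty set, `b ≥ 1`, `ρ ≥ 0`, and `d` a complete
`b`-suprametric on `X`. If `f : X → X` satisfies `d (f x) (f y) ≤ c * d x y` for some
`c ∈ [0,1)`, then `f` has a unique fixed point and every Picard iteration converges
to it. -/
theorem b_suprametric_banach_fixed_point
    {X : Type*} [Nonempty X] (b ρ : ℝ) (hb : 1 ≤ b) (hρ : 0 ≤ ρ)
    (d : X → X → ℝ)
    (hd_nonneg : ∀ x y, 0 ≤ d x y)
    (hd_eq : ∀ x y, d x y = 0 ↔ x = y)
    (hd_symm : ∀ x y, d x y = d y x)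
    (hd_tri : ∀ x y z, d x y ≤ b * (d x z + d z y) + ρ * d x z * d z y)
    (hd_complete : ∀ u : ℕ → X,
      Filter.Tendsto (fun pq : ℕ × ℕ => d (u pq.1) (u pq.2)) Filter.atTop (nhds 0) →
      ∃ x : X, Filter.Tendsto (fun n => d (u n) x) Filter.atTop (nhds 0))
    (f : X → X) (c : ℝ) (hc0 : 0 ≤ c) (hc1 : c < 1)
    (h_contr : ∀ x y, d (f x) (f y) ≤ c * d x y) :
    ∃ xs : X, f xs = xs ∧ (∀ y, f y = y → y = xs) ∧
      ∀ x₀ : X, Filter.Tendsto (fun n => d (f^[n] x₀) xs) Filter.atTop (nhds 0) := by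
  have hiter : ∀ n x y, d (f^[n] x) (f^[n] y) ≤ c ^ n * d x y := by
    intro n
    induction n with
    | zero => intro x y; simp
    | succ n ih =>
      intro x y
      rw [Function.iterate_succ_apply', Function.iterate_succ_apply']
      calc _ ≤ c * d (f^[n] x) (f^[n] y) := h_contr _ _
        _ ≤ c * (c ^ n * d x y) := mul_le_mul_of_nonneg_left (ih x y) hc0
        _ = _ := by ring
  have hpow : Filter.Tendsto (fun n : ℕ => c ^ n) Filter.atTop (nhds 0) :=
    tendsto_pow_atTop_nhds_zero_of_lt_one hc0 hc1
  have hsmall : ∀ K : ℝ, ∀ ε > 0, ∃ n : ℕ, K * c ^ n ≤ ε := by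
    intro K ε hε
    have h := hpow.const_mul K
    rw [mul_zero] at h
    obtain ⟨n, hn⟩ := (h.eventually (gt_mem_nhds hε)).exists
    exact ⟨n, hn.le⟩
  obtain ⟨x⟩ := ‹Nonempty X›
  obtain ⟨N, hN⟩ := hsmall (4 * (b + 1)) 1 one_pos
  have hN0 : 0 < N := by
    rcases Nat.eq_zero_or_pos N with h | h
    · subst h; simp at hN; linarith
    · exact h
  obtain ⟨M, hM⟩ := hsmall (ρ * d x (f^[N] x)) 1 one_pos
  obtain ⟨p, hp⟩ : ∃ p, p = f^[M] x := ⟨_, rfl⟩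
  obtain ⟨D, hD⟩ : ∃ D, D = d p (f^[N] p) := ⟨_, rfl⟩
  have hD0 : 0 ≤ D := hD ▸ hd_nonneg _ _
  have hρD : ρ * D ≤ 1 := by
    have h1 : D ≤ c ^ M * d x (f^[N] x) := by
      rw [hD, hp, ← Function.iterate_add_apply, add_comm N M, Function.iterate_add_apply]
      exact hiter _ _ _
    calc ρ * D ≤ ρ * (c ^ M * d x (f^[N] x)) := mul_le_mul_of_nonneg_left h1 hρ
      _ = ρ * d x (f^[N] x) * c ^ M := by ring
      _ ≤ 1 := hM
  have hk0 : 0 ≤ c ^ N := pow_nonneg hc0 N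
  have hstep : ∀ m, d p (f^[m + N] p) ≤ b * D + d p (f^[m] p) / 2 := by
    intro m
    have h1 := hd_tri p (f^[m + N] p) (f^[N] p)
    have h2 : d (f^[N] p) (f^[m + N] p) ≤ c ^ N * d p (f^[m] p) := by
      rw [add_comm m N, Function.iterate_add_apply]
      exact hiter _ _ _
    rw [← hD] at h1
    have h3 := hd_nonneg p (f^[m] p)
    have h4 : (b + ρ * D) * d (f^[N] p) (f^[m + N] p) ≤ (b + 1) * (c ^ N * d p (f^[m] p)) :=
      mul_le_mul (by linarith) h2 (hd_nonneg _ _) (by linarith)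
    have h5 := mul_le_mul_of_nonneg_right hN h3
    nlinarith
  obtain ⟨B, hB⟩ : ∃ B, B = 2 * b * D + ∑ j ∈ Finset.range N, d p (f^[j] p) := ⟨_, rfl⟩
  have hS0 : 0 ≤ ∑ j ∈ Finset.range N, d p (f^[j] p) :=
    Finset.sum_nonneg fun j _ => hd_nonneg _ _
  have hbD : 0 ≤ b * D := mul_nonneg (by linarith) hD0
  have hbound : ∀ m, d p (f^[m] p) ≤ B := by
    intro m
    induction m using Nat.strong_induction_on with
    | _ m ih =>
      by_cases h : m < N
      · have := Finset.single_le_sum (f := fun j => d p (f^[j] p))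
          (fun j _ => hd_nonneg _ _) (Finset.mem_range.2 h)
        linarith
      · have h1 := hstep (m - N)
        rw [Nat.sub_add_cancel (not_lt.1 h)] at h1
        have h2 := ih (m - N) (by omega)
        linarith
  have hB0 : 0 ≤ B := by linarith
  have hle : ∀ m n, d (f^[m] p) (f^[m + n] p) ≤ c ^ m * B := by
    intro m n
    rw [Function.iterate_add_apply]
    exact (hiter _ _ _).trans (mul_le_mul_of_nonneg_left (hbound n) (pow_nonneg hc0 m))
  have hcauchy : Filter.Tendsto (fun pq : ℕ × ℕ => d (f^[pq.1] p) (f^[pq.2] p))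
      Filter.atTop (nhds 0) := by
    have hfst : Filter.Tendsto (fun pq : ℕ × ℕ => c ^ pq.1 * B + c ^ pq.2 * B)
        Filter.atTop (nhds 0) := by
      rw [← Filter.prod_atTop_atTop_eq]
      have h1 := ((hpow.comp (Filter.tendsto_fst (f := Filter.atTop) (g := (Filter.atTop : Filter ℕ)))).mul_const B).add
        ((hpow.comp (Filter.tendsto_snd (f := (Filter.atTop : Filter ℕ)) (g := Filter.atTop))).mul_const B)
      simpa using h1
    refine squeeze_zero (fun _ => hd_nonneg _ _) ?_ hfst
    rintro ⟨m, n⟩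
    have e1 := mul_nonneg (pow_nonneg hc0 m) hB0
    have e2 := mul_nonneg (pow_nonneg hc0 n) hB0
    rcases le_total m n with h | h
    · have := hle m (n - m)
      rw [Nat.add_sub_cancel' h] at this
      simp only
      linarith
    · have := hle n (m - n)
      rw [Nat.add_sub_cancel' h, hd_symm] at this
      simp only
      linarith
  obtain ⟨xs, hxs⟩ := hd_complete (fun n => f^[n] p) hcauchy
  have hfix : f xs = xs := by
    rw [← hd_eq]
    have h1 : Filter.Tendsto (fun n => d (f^[n + 1] p) xs) Filter.atTop (nhds 0) :=
      hxs.comp (Filter.tendsto_add_atTop_nat 1)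
    have h2 : Filter.Tendsto (fun n => d (f xs) (f^[n + 1] p)) Filter.atTop (nhds 0) := by
      have h3 := hxs.const_mul c
      rw [mul_zero] at h3
      refine squeeze_zero (fun _ => hd_nonneg _ _) (fun n => ?_) h3
      rw [hd_symm, Function.iterate_succ_apply']
      exact h_contr _ _
    have h4 := ((h2.add h1).const_mul b).add ((h2.const_mul ρ).mul h1)
    have h5 := ge_of_tendsto' h4 (fun n => hd_tri (f xs) xs (f^[n + 1] p))
    exact le_antisymm (by simpa using h5) (hd_nonneg _ _)
  refine ⟨xs, hfix, ?_, ?_⟩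
  · intro y hy
    rw [← hd_eq]
    have h := h_contr y xs
    rw [hy, hfix] at h
    nlinarith [hd_nonneg y xs]
  · intro x₀
    have h3 := hpow.mul_const (d x₀ xs)
    rw [zero_mul] at h3
    refine squeeze_zero (fun _ => hd_nonneg _ _) (fun n => ?_) h3
    have h := hiter n x₀ xs
    rwa [Function.iterate_fixed hfix] at h
end

section
/- Let X be a nonempty set, ρ ≥ 0, and let d be a suprametric on X (i.e. a b-suprametric with b = 1) such that (X,d) is complete. Let f : X → X and suppose there exists a Matkowski function ψ such that d(f x, f y) ≤ ψ(d(x,y)) for all x, y ∈ X. Then f has a unique fixed point x⋆ in X, and for every x₀ ∈ X the Picard iterates satisfy d(fⁿ x₀, x⋆) → 0 as n → ∞. -/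
/-- **Corollary.** Let `X` be a nonempty set, `ρ ≥ 0`, and `d` a complete suprametric
on `X` (a `b`-suprametric with `b = 1`). If `f : X → X` satisfies
`d (f x) (f y) ≤ ψ (d x y)` for a Matkowski function `ψ`, then `f` has a unique fixed
point and every Picard iteration converges to it. -/
theorem suprametric_matkowski_fixed_point
    {X : Type*} [Nonempty X] (ρ : ℝ) (hρ : 0 ≤ ρ)
    (d : X → X → ℝ)
    (hd_nonneg : ∀ x y, 0 ≤ d x y)
    (hd_eq : ∀ x y, d x y = 0 ↔ x = y)
    (hd_symm : ∀ x y, d x y = d y x)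
    (hd_tri : ∀ x y z, d x y ≤ d x z + d z y + ρ * d x z * d z y)
    (hd_complete : ∀ u : ℕ → X,
      Filter.Tendsto (fun pq : ℕ × ℕ => d (u pq.1) (u pq.2)) Filter.atTop (nhds 0) →
      ∃ x : X, Filter.Tendsto (fun n => d (u n) x) Filter.atTop (nhds 0))
    (f : X → X) (ψ : ℝ → ℝ)
    (hψ_nonneg : ∀ t, 0 ≤ t → 0 ≤ ψ t)
    (hψ_mono : MonotoneOn ψ (Set.Ici 0))
    (hψ_iter : ∀ t, 0 < t →
      Filter.Tendsto (fun n => ψ^[n] t) Filter.atTop (nhds 0))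
    (h_contr : ∀ x y, d (f x) (f y) ≤ ψ (d x y)) :
    ∃ xs : X, f xs = xs ∧ (∀ y, f y = y → y = xs) ∧
      ∀ x₀ : X, Filter.Tendsto (fun n => d (f^[n] x₀) xs) Filter.atTop (nhds 0) := by
  have hlt : ∀ t, 0 < t → ψ t < t := by
    intro t ht
    by_contra hcon
    have hcon : t ≤ ψ t := not_lt.mp hcon
    have key : ∀ n : ℕ, t ≤ ψ^[n] t := by
      intro n
      induction n with
      | zero => simp
      | succ k ih =>
        rw [Function.iterate_succ_apply']
        exact hcon.trans (hψ_mono ht.le (ht.le.trans ih) ih)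
    have := ge_of_tendsto' (hψ_iter t ht) key
    linarith
  have h0 : ψ 0 = 0 := by
    have h1 := hψ_nonneg 0 le_rfl
    by_contra hne
    have hpos : 0 < ψ 0 := lt_of_le_of_ne h1 (Ne.symm hne)
    have h2 := hψ_mono (Set.mem_Ici.mpr le_rfl) (Set.mem_Ici.mpr h1) h1
    have h3 := hlt _ hpos
    linarith
  have hle : ∀ t, 0 ≤ t → ψ t ≤ t := by
    intro t ht
    rcases ht.eq_or_lt with h | h
    · rw [← h, h0]
    · exact (hlt t h).le
  have hA : ∀ x y, Filter.Tendsto (fun n => d (f^[n] x) (f^[n] y)) Filter.atTop (nhds 0) := by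
    intro x y
    have hp : 0 < d x y + 1 := by linarith [hd_nonneg x y]
    refine squeeze_zero (fun n => hd_nonneg _ _) (fun n => ?_) (hψ_iter _ hp)
    induction n with
    | zero => simp
    | succ k ih =>
      simp only [Function.iterate_succ_apply']
      exact (h_contr _ _).trans
        (hψ_mono (hd_nonneg _ _) ((hd_nonneg _ _).trans ih) ih)
  obtain ⟨a⟩ := ‹Nonempty X›
  have hball : ∀ ε, 0 < ε → ∃ N, ∀ k, d (f^[N + k] a) (f^[N] a) ≤ ε := by
    intro ε hε
    have hψε := hψ_nonneg ε hε.le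
    have hden : 0 < 1 + ρ * ψ ε := by positivity
    have hδ : 0 < (ε - ψ ε) / (1 + ρ * ψ ε) := div_pos (by linarith [hlt ε hε]) hden
    obtain ⟨N, hN⟩ := ((hA (f a) a).eventually_lt_const hδ).exists
    rw [← Function.iterate_succ_apply, Function.iterate_succ_apply', lt_div_iff₀ hden] at hN
    refine ⟨N, fun k => ?_⟩
    induction k with
    | zero => simpa [(hd_eq _ _).2 rfl] using hε.le
    | succ k ih =>
      rw [← Nat.add_assoc, Function.iterate_succ_apply']
      have h1 := hd_tri (f (f^[N + k] a)) (f^[N] a) (f (f^[N] a))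
      have h2 : d (f (f^[N + k] a)) (f (f^[N] a)) ≤ ψ ε :=
        (h_contr _ _).trans (hψ_mono (hd_nonneg _ _) hε.le ih)
      have h3 := hd_nonneg (f (f^[N] a)) (f^[N] a)
      have h4 := mul_le_mul_of_nonneg_right (mul_le_mul_of_nonneg_left h2 hρ) h3
      linarith
  have hC : Filter.Tendsto (fun pq : ℕ × ℕ => d (f^[pq.1] a) (f^[pq.2] a))
      Filter.atTop (nhds 0) := by
    rw [Metric.tendsto_atTop]
    intro e he
    have h2ρ : 0 < 2 * (2 + ρ) := by positivity
    obtain ⟨ε, hε, hε1, hεe⟩ : ∃ ε, 0 < ε ∧ ε ≤ 1 ∧ ε * (2 * (2 + ρ)) ≤ e :=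
      ⟨min 1 (e / (2 * (2 + ρ))), lt_min one_pos (div_pos he h2ρ), min_le_left _ _,
        (le_div_iff₀ h2ρ).1 (min_le_right _ _)⟩
    obtain ⟨N, hN⟩ := hball ε hε
    refine ⟨(N, N), fun pq hpq => ?_⟩
    obtain ⟨p, q⟩ := pq
    obtain ⟨hp, hq⟩ := Prod.mk_le_mk.1 hpq
    obtain ⟨k, rfl⟩ := Nat.exists_eq_add_of_le hp
    obtain ⟨l, rfl⟩ := Nat.exists_eq_add_of_le hq
    rw [Real.dist_eq, sub_zero, abs_of_nonneg (hd_nonneg _ _)]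
    have h1 := hd_tri (f^[N + k] a) (f^[N + l] a) (f^[N] a)
    have h2 := hN k
    have h3 := hN l
    rw [hd_symm] at h3
    have h4 : ρ * d (f^[N + k] a) (f^[N] a) * d (f^[N] a) (f^[N + l] a) ≤ ρ * 1 * ε := by
      apply mul_le_mul (mul_le_mul_of_nonneg_left (h2.trans hε1) hρ) h3 (hd_nonneg _ _)
      positivity
    have h5 : 0 < ε * (2 + ρ) := by positivity
    simp only
    linarith
  obtain ⟨x, hx⟩ := hd_complete (fun n => f^[n] a) hC
  have hfix : f x = x := by
    have hx1 : Filter.Tendsto (fun n => d (f^[n + 1] a) x) Filter.atTop (nhds 0) :=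
      hx.comp (Filter.tendsto_add_atTop_nat 1)
    have hx2 : Filter.Tendsto (fun n => d (f x) (f^[n + 1] a)) Filter.atTop (nhds 0) := by
      refine squeeze_zero (fun n => hd_nonneg _ _) (fun n => ?_) hx
      rw [hd_symm, Function.iterate_succ_apply']
      exact (h_contr _ _).trans (hle _ (hd_nonneg _ _))
    have hlim := (hx2.add hx1).add ((hx2.const_mul ρ).mul hx1)
    have h := ge_of_tendsto' hlim (fun n => hd_tri (f x) x (f^[n + 1] a))
    simp only [mul_zero, add_zero] at h
    exact (hd_eq _ _).1 (le_antisymm h (hd_nonneg _ _))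
  refine ⟨x, hfix, fun y hy => ?_, fun x₀ => ?_⟩
  · by_contra hne
    have hpos : 0 < d y x :=
      lt_of_le_of_ne (hd_nonneg _ _) (fun h => hne ((hd_eq _ _).1 h.symm))
    have h1 := h_contr y x
    rw [hy, hfix] at h1
    linarith [hlt _ hpos]
  · have h := hA x₀ x
    simpa only [Function.iterate_fixed hfix] using h
end

section
/- Let (X, d_m) be a metric space and let a > 0 and b ≥ 1 be real numbers. Define d(x,y) = d_m(x,y)·(a·d_m(x,y) + b) for all x,y ∈ X. Then d is a suprametric on X with constant ρ = 2a/b; in particular, d(x,y) ≤ d(x,z) + d(z,y) + (2a/b)·d(x,z)·d(z,y) for all x,y,z ∈ X, d(x,y) = 0 iff x = y, and d(x,y) = d(y,x). -/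
/-- **Example.** If `(X, d_m)` is a metric space, `a > 0` and `b ≥ 1`, then
`d (x, y) = d_m (x, y) * (a * d_m (x, y) + b)` is a suprametric on `X` with
constant `ρ = 2 a / b`. -/
theorem quadratic_of_metric_is_suprametric
    {X : Type*} [MetricSpace X] (a b : ℝ) (ha : 0 < a) (hb : 1 ≤ b) :
    (∀ x y z : X,
        dist x y * (a * dist x y + b) ≤
          dist x z * (a * dist x z + b) + dist z y * (a * dist z y + b) +
            (2 * a / b) * (dist x z * (a * dist x z + b)) *
              (dist z y * (a * dist z y + b))) ∧
    (∀ x y : X, dist x y * (a * dist x y + b) = 0 ↔ x = y) ∧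
    (∀ x y : X, dist x y * (a * dist x y + b) = dist y x * (a * dist y x + b)) := by
  have hb0 : 0 < b := by linarith
  refine ⟨fun x y z => ?_, fun x y => ?_, fun x y => by rw [dist_comm]⟩
  · have h := dist_triangle x z y
    have h0 : 0 ≤ dist x y := dist_nonneg
    have hs : 0 ≤ dist x z := dist_nonneg
    have ht : 0 ≤ dist z y := dist_nonneg
    generalize dist x y = r at *
    generalize dist x z = s at *
    generalize dist z y = t at *
    have h1 : r * (a * r + b) ≤ (s + t) * (a * (s + t) + b) := by gcongr
    have h2 : b * b ≤ (a * s + b) * (a * t + b) := by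
      have := mul_nonneg ha.le hs
      have := mul_nonneg ha.le ht
      gcongr <;> linarith
    have h3 : b ≤ (a * s + b) * (a * t + b) := by nlinarith
    have h4 : (2 * a / b) * (s * t) * b ≤
        (2 * a / b) * (s * t) * ((a * s + b) * (a * t + b)) := by gcongr
    have h5 : (2 * a / b) * (s * t) * b = 2 * a * (s * t) := by field_simp
    rw [h5] at h4
    have h6 : (2 * a / b) * (s * (a * s + b)) * (t * (a * t + b)) =
        (2 * a / b) * (s * t) * ((a * s + b) * (a * t + b)) := by ring
    rw [h6]
    linarith
  · have h0 : 0 ≤ dist x y := dist_nonneg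
    have h1 : a * dist x y + b ≠ 0 := by positivity
    rw [mul_eq_zero, or_iff_left h1, dist_eq_zero]
end

section
/- Let 0 < p < 1 and for sequences x, y ∈ ℓ_p(ℝ) set e(x,y) = (∑ₙ |xₙ − yₙ|^p)^{1/p} and d(x,y) = e(x,y)·(e(x,y) + 1). Then d is a b-suprametric on ℓ_p(ℝ) with constants b = 4^{1/p} and ρ = 8^{1/p}; in particular, d(x,y) ≤ 4^{1/p}·(d(x,z) + d(z,y)) + 8^{1/p}·d(x,z)·d(z,y) for all x,y,z ∈ ℓ_p(ℝ), d(x,y) = 0 iff x = y, and d(x,y) = d(y,x). -/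
lemma aux_abs (p : ℝ) (hp0 : 0 < p) (hp1 : p < 1) (a b : ℝ) :
    |a + b| ^ p ≤ |a| ^ p + |b| ^ p :=
  (Real.rpow_le_rpow (abs_nonneg _) (abs_add_le a b) hp0.le).trans
    (Real.rpow_add_le_add_rpow (abs_nonneg _) (abs_nonneg _) hp0.le hp1.le)

lemma aux_summable (p : ℝ) (hp0 : 0 < p) (hp1 : p < 1) (x y : ℕ → ℝ)
    (hx : Summable (fun n => |x n| ^ p)) (hy : Summable (fun n => |y n| ^ p)) :
    Summable (fun n => |x n - y n| ^ p) := by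
  refine Summable.of_nonneg_of_le (fun n => by positivity) (fun n => ?_) (hx.add hy)
  have := aux_abs p hp0 hp1 (x n) (-y n)
  rwa [abs_neg, ← sub_eq_add_neg] at this

/-- **Example.** For `0 < p < 1`, with `e (x, y) = (∑' n, |x n - y n| ^ p) ^ (1 / p)`
the `ℓ_p` `b`-metric, the distance `d (x, y) = e (x, y) * (e (x, y) + 1)` is a
`b`-suprametric on `ℓ_p (ℝ)` with `b = 4 ^ (1 / p)` and `ρ = 8 ^ (1 / p)`. -/
theorem lp_quadratic_b_suprametric (p : ℝ) (hp0 : 0 < p) (hp1 : p < 1)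
    (e : (ℕ → ℝ) → (ℕ → ℝ) → ℝ)
    (he : ∀ x y : ℕ → ℝ, e x y = (∑' n, |x n - y n| ^ p) ^ (1 / p))
    (d : (ℕ → ℝ) → (ℕ → ℝ) → ℝ)
    (hd : ∀ x y : ℕ → ℝ, d x y = e x y * (e x y + 1)) :
    (∀ x y z : ℕ → ℝ,
        Summable (fun n => |x n| ^ p) → Summable (fun n => |y n| ^ p) →
        Summable (fun n => |z n| ^ p) →
        d x y ≤ (4 : ℝ) ^ (1 / p) * (d x z + d z y) +
          (8 : ℝ) ^ (1 / p) * d x z * d z y) ∧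
    (∀ x y : ℕ → ℝ,
        Summable (fun n => |x n| ^ p) → Summable (fun n => |y n| ^ p) →
        (d x y = 0 ↔ x = y)) ∧
    (∀ x y : ℕ → ℝ, d x y = d y x) := by
  have e0 : ∀ x y, 0 ≤ e x y := fun x y => by
    rw [he]; exact Real.rpow_nonneg (tsum_nonneg fun n => by positivity) _
  refine ⟨fun x y z hx hy hz => ?_, fun x y hx hy => ?_, fun x y => ?_⟩
  · have hq : 1 ≤ 1 / p := by rw [le_div_iff₀ hp0]; linarith
    have sxz := aux_summable p hp0 hp1 x z hx hz
    have szy := aux_summable p hp0 hp1 z y hz hy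
    have sxy := aux_summable p hp0 hp1 x y hx hy
    have hsum : ∑' n, |x n - y n| ^ p ≤ ∑' n, |x n - z n| ^ p + ∑' n, |z n - y n| ^ p := by
      rw [← sxz.tsum_add szy]
      refine sxy.tsum_le_tsum (fun n => ?_) (sxz.add szy)
      have := aux_abs p hp0 hp1 (x n - z n) (z n - y n)
      rwa [sub_add_sub_cancel] at this
    have A0 : 0 ≤ ∑' n, |x n - z n| ^ p := tsum_nonneg fun n => by positivity
    have B0 : 0 ≤ ∑' n, |z n - y n| ^ p := tsum_nonneg fun n => by positivity
    have C0 : 0 ≤ ∑' n, |x n - y n| ^ p := tsum_nonneg fun n => by positivity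
    have h2 : (2 : ℝ) ^ (1 / p - 1) = (2 : ℝ) ^ (1 / p) / 2 := by
      rw [Real.rpow_sub (by norm_num), Real.rpow_one]
    have hk : e x y ≤ (2 : ℝ) ^ (1 / p) / 2 * (e x z + e z y) := by
      rw [he, he, he, ← h2]
      refine (Real.rpow_le_rpow C0 hsum (by positivity)).trans ?_
      have := NNReal.rpow_add_le_mul_rpow_add_rpow ⟨_, A0⟩ ⟨_, B0⟩ hq
      exact_mod_cast this
    have h4 : (4 : ℝ) ^ (1 / p) = ((2 : ℝ) ^ (1 / p)) ^ 2 := by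
      rw [show (4 : ℝ) = 2 * 2 by norm_num, Real.mul_rpow (by norm_num) (by norm_num)]; ring
    have hc : (2 : ℝ) ≤ (2 : ℝ) ^ (1 / p) := by
      simpa using Real.rpow_le_rpow_of_exponent_le (x := (2 : ℝ)) (by norm_num) hq
    have h8 : (0 : ℝ) ≤ (8 : ℝ) ^ (1 / p) := by positivity
    rw [h4, hd, hd, hd]
    have u0 := e0 x z
    have v0 := e0 z y
    have w0 := e0 x y
    generalize (2 : ℝ) ^ (1 / p) = c at *
    generalize (8 : ℝ) ^ (1 / p) = r at *
    generalize e x z = u at *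
    generalize e z y = v at *
    generalize e x y = w at *
    have h1 : 0 ≤ r * (u * (u + 1)) * (v * (v + 1)) := by positivity
    have h3 : w * (w + 1) ≤ (c / 2 * (u + v)) * (c / 2 * (u + v) + 1) := by gcongr
    have h5 : c ^ 2 * (u + v) ^ 2 ≤ c ^ 2 * (2 * (u ^ 2 + v ^ 2)) := by
      gcongr; nlinarith [sq_nonneg (u - v)]
    have h6 : c * (u + v) ≤ c ^ 2 * (u + v) := by
      gcongr; nlinarith
    have h7 : 0 ≤ c ^ 2 * (u ^ 2 + v ^ 2) := by positivity
    have h9 : 0 ≤ c ^ 2 * (u + v) := by positivity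
    nlinarith
  · have s := aux_summable p hp0 hp1 x y hx hy
    have n0 : ∀ n, 0 ≤ |x n - y n| ^ p := fun n => by positivity
    constructor
    · intro h
      rw [hd] at h
      have h0 : e x y = 0 := by
        rcases mul_eq_zero.1 h with h | h
        · exact h
        · linarith [e0 x y]
      rw [he, Real.rpow_eq_zero (tsum_nonneg n0) (by positivity)] at h0
      have := (hasSum_zero_iff_of_nonneg n0).1 (h0 ▸ s.hasSum)
      funext n
      have hn := congrFun this n
      simp only [Pi.zero_apply] at hn
      rw [Real.rpow_eq_zero (abs_nonneg _) hp0.ne', abs_eq_zero] at hn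
      linarith
    · rintro rfl
      rw [hd, he]
      simp [Real.zero_rpow hp0.ne', Real.zero_rpow (inv_pos.2 hp0).ne']
  · rw [hd, hd, he, he]
    simp only [abs_sub_comm]
end
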